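/- arXiv:2206.09568 — 3 statements merged into one kernel-verified Lean document; each statement's English description precedes it below -/
import Mathlib

section
/- Let (ρ, m, E, B) be a solution of the monolithic-regularized ideal MHD system on ℝ^d × (0,∞) with ρ > 0, twice continuously differentiable in space and continuously differentiable in time, and assume ∇·B = 0. Then, with u := m/ρ and e := (E − ρ|u|²/2 − |B|²/2)/ρ, the internal energy balance ρ(∂_t e + u·∇e) + (e − |u|²/2) εΔρ + p (∇·u) − εΔE + ε u·Δm + ε B·ΔB = 0 holds at every point. -/
open scoped BigOperators

/-- Spatial partial derivative `∂_i f (x)` of a scalar field on `ℝ^d`. -/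
noncomputable def spd {d : ℕ} (f : (Fin d → ℝ) → ℝ) (i : Fin d) (x : Fin d → ℝ) : ℝ :=
  fderiv ℝ f x (Pi.single i 1)

/-- Laplacian `Δf(x) = ∑ᵢ ∂ᵢ∂ᵢ f (x)` of a scalar field on `ℝ^d`. -/
noncomputable def slap {d : ℕ} (f : (Fin d → ℝ) → ℝ) (x : Fin d → ℝ) : ℝ :=
  ∑ i, spd (spd f i) i x

/-- The Maxwell stress tensor `𝒯 = B ⊗ B − (|B|²/2) I` built from a vector `B ∈ ℝ^d`. -/
noncomputable def maxwellT {d : ℕ} (B : Fin d → ℝ) (i j : Fin d) : ℝ :=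
  B i * B j - (if i = j then (∑ k, (B k) ^ 2) / 2 else 0)

/-- Specific internal energy `e = (E − ρ|u|²/2 − |B|²/2)/ρ` with `u = m/ρ`,
as a space-time field. -/
noncomputable def specE {d : ℕ} (ρ E : (Fin d → ℝ) → ℝ → ℝ)
    (m B : (Fin d → ℝ) → ℝ → Fin d → ℝ) (x : Fin d → ℝ) (t : ℝ) : ℝ :=
  (E x t - ρ x t * (∑ i, (m x t i / ρ x t) ^ 2) / 2 - (∑ i, (B x t i) ^ 2) / 2) / ρ x t

/-!
Let `D = ∂ₜ + u · ∇` be the material derivative. Replacing each right-hand side `εΔ(·)` by an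
arbitrary source, the conservation laws take the advective forms

* `Dρ + ρ ∇·u = Sρ`,
* `ρ Duᵢ + uᵢ Sρ + ∂ᵢp − (∇·𝒯)ᵢ = Smᵢ`,
* `DBᵢ + Bᵢ ∇·u − (B · ∇)uᵢ = SBᵢ`, where `∇·B = 0` is used,
* `DE + (E + p) ∇·u + u·∇p − u·(∇·𝒯) − 𝒯 : ∇u = SE`.

Contract the second with `u` and the third with `B` and subtract both from the last: the pressure
gradient and `∇·𝒯` cancel, and so do the terms `B·(B · ∇)u`, one of which comes from
`𝒯 : ∇u = B·(B · ∇)u − (|B|²/2) ∇·u`. Applying `D` to `E = ρe + ρ|u|²/2 + |B|²/2` turns what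
remains into the balance for `e`.
-/

lemma mul_fderiv_div_apply {𝕜 X : Type*} [NontriviallyNormedField 𝕜] [NormedAddCommGroup X]
    [NormedSpace 𝕜 X] {f g : X → 𝕜} {x : X} (hf : DifferentiableAt 𝕜 f x)
    (hg : DifferentiableAt 𝕜 g x) (hgx : g x ≠ 0) (v : X) :
    g x * fderiv 𝕜 (fun y => f y / g y) x v = fderiv 𝕜 f x v - f x / g x * fderiv 𝕜 g x v := by
  have hquot : DifferentiableAt 𝕜 (fun y => f y / g y) x := by fun_prop (disch := assumption)
  have hfac : f =ᶠ[nhds x] fun y => g y * (f y / g y) := by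
    filter_upwards [hg.continuousAt.eventually_ne hgx] with y hy
    rw [mul_div_cancel₀ _ hy]
  rw [hfac.fderiv_eq, fderiv_fun_mul hg hquot, add_apply, smul_apply, smul_apply,
    smul_eq_mul, smul_eq_mul, add_sub_cancel_right]

section MaterialDerivative

variable {X : Type*} [NormedAddCommGroup X] [NormedSpace ℝ X]

/-- Differentiability at `(x, t)` of a space-time field in the space variable and in the time
variable separately; joint differentiability is not required. -/
structure SliceDifferentiableAt (f : X → ℝ → ℝ) (x : X) (t : ℝ) : Prop where
  space : DifferentiableAt ℝ (fun y => f y t) x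
  time : DifferentiableAt ℝ (fun s => f x s) t

/-- The material derivative `∂ₜf + v · ∇f` at `(x, t)` of a space-time field `f`. The argument `v`
is the value at `(x, t)` of the transporting velocity. -/
noncomputable def materialDeriv (v : X) (f : X → ℝ → ℝ) (x : X) (t : ℝ) : ℝ :=
  deriv (fun s => f x s) t + fderiv ℝ (fun y => f y t) x v

variable {f g : X → ℝ → ℝ} {x : X} {t : ℝ}

namespace SliceDifferentiableAt

lemma of_contDiff {n k : WithTop ℕ∞} (hn : n ≠ 0) (hk : k ≠ 0)
    (hspace : ContDiff ℝ n fun y => f y t) (htime : ContDiff ℝ k fun s => f x s) :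
    SliceDifferentiableAt f x t :=
  ⟨hspace.differentiable hn x, htime.differentiable hk t⟩

lemma sub (hf : SliceDifferentiableAt f x t) (hg : SliceDifferentiableAt g x t) :
    SliceDifferentiableAt (fun y s => f y s - g y s) x t :=
  ⟨hf.space.fun_sub hg.space, hf.time.fun_sub hg.time⟩

lemma mul (hf : SliceDifferentiableAt f x t) (hg : SliceDifferentiableAt g x t) :
    SliceDifferentiableAt (fun y s => f y s * g y s) x t :=
  ⟨hf.space.fun_mul hg.space, hf.time.fun_mul hg.time⟩

lemma div (hf : SliceDifferentiableAt f x t) (hg : SliceDifferentiableAt g x t)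
    (hgx : g x t ≠ 0) : SliceDifferentiableAt (fun y s => f y s / g y s) x t :=
  have hf_space := hf.space
  have hg_space := hg.space
  ⟨by fun_prop (disch := assumption), hf.time.fun_div hg.time hgx⟩

lemma sum_sq_div_two {ι : Type*} [Fintype ι] {a : X → ℝ → ι → ℝ}
    (ha : ∀ i, SliceDifferentiableAt (fun y s => a y s i) x t) :
    SliceDifferentiableAt (fun y s => (∑ i, a y s i ^ 2) / 2) x t :=
  have ha_space := fun i => (ha i).space
  have ha_time := fun i => (ha i).time
  ⟨by fun_prop, by fun_prop⟩

end SliceDifferentiableAt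

lemma materialDeriv_sub (hf : SliceDifferentiableAt f x t) (hg : SliceDifferentiableAt g x t)
    (v : X) : materialDeriv v (fun y s => f y s - g y s) x t
      = materialDeriv v f x t - materialDeriv v g x t := by
  simp only [materialDeriv, deriv_fun_sub hf.time hg.time, fderiv_fun_sub hf.space hg.space,
    sub_apply]
  ring

lemma materialDeriv_mul (hf : SliceDifferentiableAt f x t) (hg : SliceDifferentiableAt g x t)
    (v : X) : materialDeriv v (fun y s => f y s * g y s) x t
      = f x t * materialDeriv v g x t + g x t * materialDeriv v f x t := by
  simp only [materialDeriv, deriv_fun_mul hf.time hg.time, fderiv_fun_mul hf.space hg.space,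
    add_apply, smul_apply, smul_eq_mul]
  ring

lemma mul_materialDeriv_div (hf : SliceDifferentiableAt f x t) (hg : SliceDifferentiableAt g x t)
    (hgx : g x t ≠ 0) (v : X) : g x t * materialDeriv v (fun y s => f y s / g y s) x t
      = materialDeriv v f x t - f x t / g x t * materialDeriv v g x t := by
  have hspace := mul_fderiv_div_apply hf.space hg.space hgx v
  have htime := mul_fderiv_div_apply hf.time hg.time hgx 1
  simp only [fderiv_apply_one_eq_deriv] at htime
  simp only [materialDeriv]
  linear_combination hspace + htime

lemma materialDeriv_sum_sq_div_two {ι : Type*} [Fintype ι] {a : X → ℝ → ι → ℝ}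
    (ha : ∀ i, SliceDifferentiableAt (fun y s => a y s i) x t) (v : X) :
    materialDeriv v (fun y s => (∑ i, a y s i ^ 2) / 2) x t
      = ∑ i, a x t i * materialDeriv v (fun y s => a y s i) x t := by
  have hspace : fderiv ℝ (fun y => (∑ i, a y t i ^ 2) / 2) x
      = ∑ i, a x t i • fderiv ℝ (fun y => a y t i) x := by
    simp only [div_eq_mul_inv]
    rw [fderiv_mul_const (.fun_sum fun i _ => (ha i).space.fun_pow 2),
      fderiv_fun_sum fun i _ => (ha i).space.fun_pow 2, Finset.smul_sum]
    refine Finset.sum_congr rfl fun i _ => ?_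
    rw [fderiv_fun_pow 2 (ha i).space, smul_smul]
    simp
  have htime : deriv (fun s => (∑ i, a x s i ^ 2) / 2) t
      = ∑ i, a x t i * deriv (fun s => a x s i) t := by
    rw [deriv_div_const, deriv_fun_sum fun i _ => (ha i).time.fun_pow 2, Finset.sum_div]
    refine Finset.sum_congr rfl fun i _ => ?_
    rw [deriv_fun_pow (ha i).time]
    ring
  simp only [materialDeriv, hspace, htime, sum_apply,
    smul_apply, smul_eq_mul, mul_add, Finset.sum_add_distrib]

end MaterialDerivative

section SpatialDivergence

variable {d : ℕ} {f : (Fin d → ℝ) → ℝ} {v w : (Fin d → ℝ) → Fin d → ℝ} {x : Fin d → ℝ}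

/-- The spatial divergence `∇·v = ∑ⱼ ∂ⱼvⱼ` of a vector field on `ℝ^d`. -/
noncomputable def sdiv (v : (Fin d → ℝ) → Fin d → ℝ) (x : Fin d → ℝ) : ℝ :=
  ∑ j, spd (fun y => v y j) j x

lemma sum_mul_spd (f : (Fin d → ℝ) → ℝ) (a x : Fin d → ℝ) :
    ∑ j, a j * spd f j x = fderiv ℝ f x a := by
  simp only [spd, ← smul_eq_mul, ← map_smul, ← map_sum]
  rw [← pi_eq_sum_univ' a]

lemma sdiv_add (hv : ∀ j, DifferentiableAt ℝ (fun y => v y j) x)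
    (hw : ∀ j, DifferentiableAt ℝ (fun y => w y j) x) :
    sdiv (fun y j => v y j + w y j) x = sdiv v x + sdiv w x := by
  simp only [sdiv, spd, fderiv_fun_add (hv _) (hw _), add_apply,
    Finset.sum_add_distrib]

lemma sdiv_sub (hv : ∀ j, DifferentiableAt ℝ (fun y => v y j) x)
    (hw : ∀ j, DifferentiableAt ℝ (fun y => w y j) x) :
    sdiv (fun y j => v y j - w y j) x = sdiv v x - sdiv w x := by
  simp only [sdiv, spd, fderiv_fun_sub (hv _) (hw _), sub_apply,
    Finset.sum_sub_distrib]

lemma sdiv_sum {ι : Type*} [Fintype ι] {v : ι → (Fin d → ℝ) → Fin d → ℝ}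
    (hv : ∀ k j, DifferentiableAt ℝ (fun y => v k y j) x) :
    sdiv (fun y j => ∑ k, v k y j) x = ∑ k, sdiv (v k) x := by
  simp only [sdiv, spd, fderiv_fun_sum fun k _ => hv k _, sum_apply]
  exact Finset.sum_comm

lemma sdiv_mul (hf : DifferentiableAt ℝ f x) (hv : ∀ j, DifferentiableAt ℝ (fun y => v y j) x) :
    sdiv (fun y j => f y * v y j) x = f x * sdiv v x + fderiv ℝ f x (v x) := by
  rw [← sum_mul_spd]
  simp only [sdiv, spd, fderiv_fun_mul hf (hv _), add_apply,
    smul_apply, smul_eq_mul, Finset.sum_add_distrib, Finset.mul_sum]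

lemma mul_sdiv_div (hv : ∀ j, DifferentiableAt ℝ (fun y => v y j) x)
    (hf : DifferentiableAt ℝ f x) (hfx : f x ≠ 0) :
    f x * sdiv (fun y j => v y j / f y) x
      = sdiv v x - fderiv ℝ f x (fun j => v x j / f x) := by
  rw [← sum_mul_spd]
  simp only [sdiv, spd, Finset.mul_sum, mul_fderiv_div_apply (hv _) hf hfx,
    Finset.sum_sub_distrib]

lemma sdiv_ite_eq (p : (Fin d → ℝ) → ℝ) (i : Fin d) (x : Fin d → ℝ) :
    sdiv (fun y j => if i = j then p y else 0) x = spd p i x := by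
  rw [sdiv, Finset.sum_eq_single_of_mem i (Finset.mem_univ i)]
  · simp
  · intro j _ hji
    simp [spd, hji.symm]

end SpatialDivergence

section Fluxes

variable {d : ℕ} {f p : (Fin d → ℝ) → ℝ} {u b τ : (Fin d → ℝ) → Fin d → ℝ}
  {T : (Fin d → ℝ) → Fin d → Fin d → ℝ} {x : Fin d → ℝ}

lemma sdiv_momentum_flux (hf : DifferentiableAt ℝ f x)
    (hu : ∀ j, DifferentiableAt ℝ (fun y => u y j) x) (hp : DifferentiableAt ℝ p x)
    (hτ : ∀ j, DifferentiableAt ℝ (fun y => τ y j) x) (i : Fin d) :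
    sdiv (fun y j => f y * u y j + (if i = j then p y else 0) - τ y j) x
      = f x * sdiv u x + fderiv ℝ f x (u x) + spd p i x - sdiv τ x := by
  have hfu : ∀ j, DifferentiableAt ℝ (fun y => f y * u y j) x := fun j => hf.fun_mul (hu j)
  have hpi : ∀ j, DifferentiableAt ℝ (fun y => if i = j then p y else 0) x := fun j => by
    split_ifs <;> fun_prop
  rw [sdiv_sub (fun j => (hfu j).fun_add (hpi j)) hτ, sdiv_add hfu hpi, sdiv_mul hf hu,
    sdiv_ite_eq]

lemma sdiv_energy_flux (hf : DifferentiableAt ℝ f x)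
    (hu : ∀ j, DifferentiableAt ℝ (fun y => u y j) x)
    (hT : ∀ k j, DifferentiableAt ℝ (fun y => T y k j) x) :
    sdiv (fun y j => u y j * f y - ∑ k, u y k * T y k j) x
      = f x * sdiv u x + fderiv ℝ f x (u x)
        - ∑ k, (u x k * sdiv (fun y => T y k) x + fderiv ℝ (fun y => u y k) x (T x k)) := by
  have huT : ∀ k j, DifferentiableAt ℝ (fun y => u y k * T y k j) x :=
    fun k j => (hu k).fun_mul (hT k j)
  simp only [mul_comm (u _ _) (f _)]
  rw [sdiv_sub (fun j => hf.fun_mul (hu j)) (fun j => .fun_sum fun k _ => huT k j),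
    sdiv_mul hf hu, sdiv_sum huT]
  simp only [sdiv_mul (hu _) (hT _)]

lemma sdiv_induction_flux (hu : ∀ j, DifferentiableAt ℝ (fun y => u y j) x)
    (hb : ∀ j, DifferentiableAt ℝ (fun y => b y j) x) (i : Fin d) :
    sdiv (fun y j => u y j * b y i - b y j * u y i) x
      = b x i * sdiv u x + fderiv ℝ (fun y => b y i) x (u x)
        - (u x i * sdiv b x + fderiv ℝ (fun y => u y i) x (b x)) := by
  simp only [mul_comm (u _ _) (b _ i), mul_comm (b _ _) (u _ i)]
  rw [sdiv_sub (fun j => (hb i).fun_mul (hu j)) (fun j => (hu i).fun_mul (hb j)),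
    sdiv_mul (hb i) hu, sdiv_mul (hu i) hb]

lemma differentiableAt_maxwellT (hb : ∀ j, DifferentiableAt ℝ (fun y => b y j) x) (i j : Fin d) :
    DifferentiableAt ℝ (fun y => maxwellT (b y) i j) x := by
  unfold maxwellT
  split_ifs <;> fun_prop

lemma sum_fderiv_maxwellT (u : (Fin d → ℝ) → Fin d → ℝ) (c x : Fin d → ℝ) :
    ∑ k, fderiv ℝ (fun y => u y k) x (maxwellT c k)
      = ∑ k, c k * fderiv ℝ (fun y => u y k) x c - (∑ k, c k ^ 2) / 2 * sdiv u x := by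
  have maxwellT_row (k : Fin d) :
      maxwellT c k = c k • c - ((∑ l, c l ^ 2) / 2) • Pi.single k 1 := by
    ext j
    simp [maxwellT, Pi.single_apply, eq_comm]
  simp only [maxwellT_row, map_sub, map_smul, smul_eq_mul, Finset.sum_sub_distrib, sdiv, spd,
    Finset.mul_sum]

end Fluxes

section EnergyBalances

variable {d : ℕ} {ρ E : (Fin d → ℝ) → ℝ → ℝ} {m B u : (Fin d → ℝ) → ℝ → Fin d → ℝ}
  {p : (Fin d → ℝ) → ℝ} {T : (Fin d → ℝ) → Fin d → Fin d → ℝ} {x : Fin d → ℝ} {t : ℝ}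

/-- The velocity field `u = m/ρ`; it takes the junk value `0` where `ρ = 0`. -/
noncomputable def velocity (ρ : (Fin d → ℝ) → ℝ → ℝ) (m : (Fin d → ℝ) → ℝ → Fin d → ℝ)
    (x : Fin d → ℝ) (t : ℝ) (i : Fin d) : ℝ :=
  m x t i / ρ x t

lemma mul_specE (hρ0 : ρ x t ≠ 0) : ρ x t * specE ρ E m B x t
    = E x t - ρ x t * ((∑ i, velocity ρ m x t i ^ 2) / 2) - (∑ i, B x t i ^ 2) / 2 := by
  rw [specE, mul_div_cancel₀ _ hρ0, mul_div_assoc]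
  rfl

lemma mul_materialDeriv_specE (hρ0 : ρ x t ≠ 0) (hρ : SliceDifferentiableAt ρ x t)
    (hE : SliceDifferentiableAt E x t) (hm : ∀ i, SliceDifferentiableAt (fun y s => m y s i) x t)
    (hB : ∀ i, SliceDifferentiableAt (fun y s => B y s i) x t) (v : Fin d → ℝ) :
    ρ x t * materialDeriv v (specE ρ E m B) x t
      = materialDeriv v E x t
        - (specE ρ E m B x t + (∑ i, velocity ρ m x t i ^ 2) / 2) * materialDeriv v ρ x t
        - ρ x t * ∑ i, velocity ρ m x t i * materialDeriv v (fun y s => velocity ρ m y s i) x t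
        - ∑ i, B x t i * materialDeriv v (fun y s => B y s i) x t := by
  have hu : ∀ i, SliceDifferentiableAt (fun y s => velocity ρ m y s i) x t :=
    fun i => (hm i).div hρ hρ0
  have hkin := SliceDifferentiableAt.sum_sq_div_two hu
  have hmag := SliceDifferentiableAt.sum_sq_div_two hB
  have hspecE : specE ρ E m B = fun y s => (E y s
      - ρ y s * ((∑ i, velocity ρ m y s i ^ 2) / 2) - (∑ i, B y s i ^ 2) / 2) / ρ y s := by
    funext y s
    rw [specE, mul_div_assoc]
    rfl
  rw [hspecE, mul_materialDeriv_div ((hE.sub (hρ.mul hkin)).sub hmag) hρ hρ0,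
    materialDeriv_sub (hE.sub (hρ.mul hkin)) hmag, materialDeriv_sub hE (hρ.mul hkin),
    materialDeriv_mul hρ hkin, materialDeriv_sum_sq_div_two hu, materialDeriv_sum_sq_div_two hB]
  ring

lemma density_balance (hρ0 : ρ x t ≠ 0) (hρ : DifferentiableAt ℝ (fun y => ρ y t) x)
    (hm : ∀ i, DifferentiableAt ℝ (fun y => m y t i) x) {S : ℝ}
    (hmass : deriv (fun s => ρ x s) t + sdiv (fun y => m y t) x = S) :
    materialDeriv (velocity ρ m x t) ρ x t + ρ x t * sdiv (fun y => velocity ρ m y t) x = S := by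
  have hdiv : ρ x t * sdiv (fun y => velocity ρ m y t) x
      = sdiv (fun y => m y t) x - fderiv ℝ (fun y => ρ y t) x (velocity ρ m x t) :=
    mul_sdiv_div hm hρ hρ0
  rw [materialDeriv, hdiv, ← hmass]
  ring

lemma velocity_balance (hρ0 : ρ x t ≠ 0) (hρ : SliceDifferentiableAt ρ x t)
    (hm : ∀ i, SliceDifferentiableAt (fun y s => m y s i) x t) (hp : DifferentiableAt ℝ p x)
    (hT : ∀ i j, DifferentiableAt ℝ (fun y => T y i j) x) {Sρ : ℝ} {S : Fin d → ℝ}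
    (hmass : deriv (fun s => ρ x s) t + sdiv (fun y => m y t) x = Sρ)
    (hmom : ∀ i, deriv (fun s => m x s i) t + sdiv (fun y j =>
      m y t i * velocity ρ m y t j + (if i = j then p y else 0) - T y i j) x = S i) (i : Fin d) :
    ρ x t * materialDeriv (velocity ρ m x t) (fun y s => velocity ρ m y s i) x t
      + velocity ρ m x t i * Sρ + spd p i x - sdiv (fun y => T y i) x = S i := by
  have hu : ∀ j, DifferentiableAt ℝ (fun y => velocity ρ m y t j) x :=
    fun j => ((hm j).div hρ hρ0).space
  have hcons : m x t i = ρ x t * velocity ρ m x t i := (mul_div_cancel₀ _ hρ0).symm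
  have hquot : ρ x t * materialDeriv (velocity ρ m x t) (fun y s => velocity ρ m y s i) x t
      = materialDeriv (velocity ρ m x t) (fun y s => m y s i) x t
        - velocity ρ m x t i * materialDeriv (velocity ρ m x t) ρ x t :=
    mul_materialDeriv_div (hm i) hρ hρ0 _
  rw [hquot, ← hmom i, sdiv_momentum_flux (hm i).space hu hp (hT i), hcons,
    ← density_balance hρ0 hρ.space (fun j => (hm j).space) hmass, materialDeriv]
  ring

lemma kinetic_energy_balance (hρ0 : ρ x t ≠ 0) (hρ : SliceDifferentiableAt ρ x t)
    (hm : ∀ i, SliceDifferentiableAt (fun y s => m y s i) x t) (hp : DifferentiableAt ℝ p x)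
    (hT : ∀ i j, DifferentiableAt ℝ (fun y => T y i j) x) {Sρ : ℝ} {S : Fin d → ℝ}
    (hmass : deriv (fun s => ρ x s) t + sdiv (fun y => m y t) x = Sρ)
    (hmom : ∀ i, deriv (fun s => m x s i) t + sdiv (fun y j =>
      m y t i * velocity ρ m y t j + (if i = j then p y else 0) - T y i j) x = S i) :
    ρ x t * ∑ i, velocity ρ m x t i
          * materialDeriv (velocity ρ m x t) (fun y s => velocity ρ m y s i) x t
        + (∑ i, velocity ρ m x t i ^ 2) * Sρ + fderiv ℝ p x (velocity ρ m x t)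
        - ∑ i, velocity ρ m x t i * sdiv (fun y => T y i) x
      = ∑ i, velocity ρ m x t i * S i := by
  rw [← sum_mul_spd, Finset.mul_sum, Finset.sum_mul, ← Finset.sum_add_distrib,
    ← Finset.sum_add_distrib, ← Finset.sum_sub_distrib]
  refine Finset.sum_congr rfl fun i _ => ?_
  rw [← velocity_balance hρ0 hρ hm hp hT hmass hmom i]
  ring

lemma magnetic_energy_balance (hu : ∀ j, DifferentiableAt ℝ (fun y => u y t j) x)
    (hB : ∀ j, DifferentiableAt ℝ (fun y => B y t j) x) (hdivB : sdiv (fun y => B y t) x = 0)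
    {S : Fin d → ℝ} (hind : ∀ i, deriv (fun s => B x s i) t
      + sdiv (fun y j => u y t j * B y t i - B y t j * u y t i) x = S i) :
    ∑ i, B x t i * materialDeriv (u x t) (fun y s => B y s i) x t
        + (∑ i, B x t i ^ 2) * sdiv (fun y => u y t) x
        - ∑ i, B x t i * fderiv ℝ (fun y => u y t i) x (B x t)
      = ∑ i, B x t i * S i := by
  rw [Finset.sum_mul, ← Finset.sum_add_distrib, ← Finset.sum_sub_distrib]
  refine Finset.sum_congr rfl fun i _ => ?_
  rw [← hind i, sdiv_induction_flux hu hB, hdivB, materialDeriv]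
  ring

lemma total_energy_balance (hE : DifferentiableAt ℝ (fun y => E y t) x)
    (hp : DifferentiableAt ℝ p x) (hu : ∀ j, DifferentiableAt ℝ (fun y => u y t j) x)
    (hB : ∀ j, DifferentiableAt ℝ (fun y => B y t j) x) {S : ℝ}
    (hener : deriv (fun s => E x s) t + sdiv (fun y j => u y t j * (E y t + p y)
      - ∑ k, u y t k * maxwellT (B y t) k j) x = S) :
    materialDeriv (u x t) E x t + fderiv ℝ p x (u x t)
        + (E x t + p x + (∑ i, B x t i ^ 2) / 2) * sdiv (fun y => u y t) x
        - ∑ i, u x t i * sdiv (fun y => maxwellT (B y t) i) x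
        - ∑ i, B x t i * fderiv ℝ (fun y => u y t i) x (B x t)
      = S := by
  rw [← hener, sdiv_energy_flux (hE.fun_add hp) hu (differentiableAt_maxwellT hB),
    fderiv_fun_add hE hp, Finset.sum_add_distrib, sum_fderiv_maxwellT, materialDeriv, add_apply]
  ring

end EnergyBalances

theorem stmt_5_general {d : ℕ} {ρ E p : (Fin d → ℝ) → ℝ → ℝ}
    {m B : (Fin d → ℝ) → ℝ → Fin d → ℝ} {x : Fin d → ℝ} {t : ℝ} (hρ0 : ρ x t ≠ 0)
    (hρ : SliceDifferentiableAt ρ x t) (hE : SliceDifferentiableAt E x t)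
    (hp : DifferentiableAt ℝ (fun y => p y t) x)
    (hm : ∀ i, SliceDifferentiableAt (fun y s => m y s i) x t)
    (hB : ∀ i, SliceDifferentiableAt (fun y s => B y s i) x t)
    (hdivB : ∑ j, spd (fun y => B y t j) j x = 0) {Sρ SE : ℝ} {Sm SB : Fin d → ℝ}
    (hmass : deriv (fun τ => ρ x τ) t + (∑ j, spd (fun y => m y t j) j x) = Sρ)
    (hmom : ∀ i, deriv (fun τ => m x τ i) t
      + (∑ j, spd (fun y => m y t i * (m y t j / ρ y t)
          + (if i = j then p y t else 0) - maxwellT (B y t) i j) j x) = Sm i)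
    (hener : deriv (fun τ => E x τ) t
      + (∑ j, spd (fun y => (m y t j / ρ y t) * (E y t + p y t)
          - ∑ k, (m y t k / ρ y t) * maxwellT (B y t) k j) j x) = SE)
    (hind : ∀ i, deriv (fun τ => B x τ i) t
      + (∑ j, spd (fun y => (m y t j / ρ y t) * B y t i - B y t j * (m y t i / ρ y t)) j x)
        = SB i) :
    ρ x t * (deriv (fun τ => specE ρ E m B x τ) t
          + ∑ i, (m x t i / ρ x t) * spd (fun y => specE ρ E m B y t) i x)
        + (specE ρ E m B x t - (∑ i, (m x t i / ρ x t) ^ 2) / 2) * Sρ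
        + p x t * (∑ j, spd (fun y => m y t j / ρ y t) j x)
        - SE
        + (∑ i, (m x t i / ρ x t) * Sm i)
        + (∑ i, B x t i * SB i) = 0 := by
  have hu : ∀ j, DifferentiableAt ℝ (fun y => velocity ρ m y t j) x :=
    fun j => ((hm j).div hρ hρ0).space
  have hBx := fun j => (hB j).space
  have density := density_balance hρ0 hρ.space (fun j => (hm j).space) hmass
  have kinetic := kinetic_energy_balance hρ0 hρ hm hp (differentiableAt_maxwellT hBx) hmass hmom
  have magnetic := magnetic_energy_balance (u := velocity ρ m) hu hBx hdivB hind
  have total := total_energy_balance (u := velocity ρ m) hE.space hp hu hBx hener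
  have chain := mul_materialDeriv_specE hρ0 hρ hE hm hB (velocity ρ m x t)
  have internal := mul_specE (E := E) (m := m) (B := B) hρ0
  rw [sum_mul_spd]
  change ρ x t * materialDeriv (velocity ρ m x t) (specE ρ E m B) x t
    + (specE ρ E m B x t - (∑ i, velocity ρ m x t i ^ 2) / 2) * Sρ
    + p x t * sdiv (fun y => velocity ρ m y t) x - SE
    + ∑ i, velocity ρ m x t i * Sm i + ∑ i, B x t i * SB i = 0
  linear_combination chain + total - kinetic - magnetic
    - (specE ρ E m B x t + (∑ i, velocity ρ m x t i ^ 2) / 2) * density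
    + sdiv (fun y => velocity ρ m y t) x * internal

/-- for smooth positive-density solutions of the monolithic-regularized ideal
MHD system with `∇·B = 0`, the internal energy balance
`ρ(∂ₜe + u·∇e) + (e − |u|²/2)εΔρ + p(∇·u) − εΔE + εu·Δm + εB·ΔB = 0` holds pointwise. -/
theorem stmt_5 {d : ℕ} (hd : 1 ≤ d) (ε : ℝ) (hε : 0 < ε)
    (ρ E p : (Fin d → ℝ) → ℝ → ℝ) (m B : (Fin d → ℝ) → ℝ → Fin d → ℝ)
    (hρpos : ∀ x t, 0 < ρ x t)
    (hρx : ∀ t, ContDiff ℝ 2 fun x => ρ x t) (hρt : ∀ x, ContDiff ℝ 1 fun t => ρ x t)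
    (hmx : ∀ t i, ContDiff ℝ 2 fun x => m x t i) (hmt : ∀ x i, ContDiff ℝ 1 fun t => m x t i)
    (hEx : ∀ t, ContDiff ℝ 2 fun x => E x t) (hEt : ∀ x, ContDiff ℝ 1 fun t => E x t)
    (hBx : ∀ t i, ContDiff ℝ 2 fun x => B x t i) (hBt : ∀ x i, ContDiff ℝ 1 fun t => B x t i)
    (hpx : ∀ t, ContDiff ℝ 1 fun x => p x t)
    (hdivB : ∀ (x : Fin d → ℝ) (t : ℝ), 0 < t → (∑ j, spd (fun y => B y t j) j x) = 0)
    (hmass : ∀ (x : Fin d → ℝ) (t : ℝ), 0 < t →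
      deriv (fun τ => ρ x τ) t + (∑ j, spd (fun y => m y t j) j x)
        = ε * slap (fun y => ρ y t) x)
    (hmom : ∀ (x : Fin d → ℝ) (t : ℝ), 0 < t → ∀ i,
      deriv (fun τ => m x τ i) t
        + (∑ j, spd (fun y => m y t i * (m y t j / ρ y t)
            + (if i = j then p y t else 0) - maxwellT (B y t) i j) j x)
        = ε * slap (fun y => m y t i) x)
    (hener : ∀ (x : Fin d → ℝ) (t : ℝ), 0 < t →
      deriv (fun τ => E x τ) t
        + (∑ j, spd (fun y => (m y t j / ρ y t) * (E y t + p y t)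
            - ∑ k, (m y t k / ρ y t) * maxwellT (B y t) k j) j x)
        = ε * slap (fun y => E y t) x)
    (hind : ∀ (x : Fin d → ℝ) (t : ℝ), 0 < t → ∀ i,
      deriv (fun τ => B x τ i) t
        + (∑ j, spd (fun y => (m y t j / ρ y t) * B y t i - B y t j * (m y t i / ρ y t)) j x)
        = ε * slap (fun y => B y t i) x) :
    ∀ (x : Fin d → ℝ) (t : ℝ), 0 < t →
      ρ x t * (deriv (fun τ => specE ρ E m B x τ) t
          + ∑ i, (m x t i / ρ x t) * spd (fun y => specE ρ E m B y t) i x)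
        + (specE ρ E m B x t - (∑ i, (m x t i / ρ x t) ^ 2) / 2)
            * (ε * slap (fun y => ρ y t) x)
        + p x t * (∑ j, spd (fun y => m y t j / ρ y t) j x)
        - ε * slap (fun y => E y t) x
        + ε * (∑ i, (m x t i / ρ x t) * slap (fun y => m y t i) x)
        + ε * (∑ i, B x t i * slap (fun y => B y t i) x) = 0 := by
  intro x t ht
  have balance := stmt_5_general (hρpos x t).ne'
    (.of_contDiff two_ne_zero one_ne_zero (hρx t) (hρt x))
    (.of_contDiff two_ne_zero one_ne_zero (hEx t) (hEt x))
    ((hpx t).differentiable one_ne_zero x)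
    (fun i => .of_contDiff two_ne_zero one_ne_zero (hmx t i) (hmt x i))
    (fun i => .of_contDiff two_ne_zero one_ne_zero (hBx t i) (hBt x i))
    (hdivB x t ht) (hmass x t ht) (hmom x t ht) (hener x t ht) (hind x t ht)
  simpa only [mul_left_comm _ ε, ← Finset.mul_sum] using balance
end

section
/- Let ρ : ℝ^d × [0,T] → ℝ be continuous and positive, let u : ℝ^d × [0,T] → ℝ^d be continuous, let ε > 0, and let s : ℝ^d × [0,T] → ℝ be continuous, twice continuously differentiable in space and continuously differentiable in time on ℝ^d × (0,T), and satisfy the pointwise inequality ρ(∂_t s + u·∇s) − ∇·(ε ρ ∇s) − ε ∇ρ·∇s ≥ 0 (with ρ continuously differentiable in space). Assume there are a compact set K ⊂ ℝ^d and a constant s* such that s(x,t) = s* for all x ∉ K and all t ∈ [0,T]. Then for every t ∈ [0,T], inf_{x ∈ ℝ^d} s(x,t) ≥ inf_{x ∈ ℝ^d} s(x,0) (minimum entropy principle). -/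
open scoped BigOperators

/-!
At a spatial minimum of the entropy the gradient vanishes, so the convective term and `ε∇ρ·∇s`
drop out and `∇·(ερ∇s)` reduces to `ερΔs ≥ 0`; the entropy production inequality then says that the
entropy is nondecreasing in time there. Adding `δt` makes this strict, and a strictly increasing
spatial minimum cannot go below its initial value: at a space-time minimum attained after the
initial time, the time derivative would have to be nonpositive.
-/

open Set Filter Topology

section Calculus

variable {E : Type*} [NormedAddCommGroup E] [NormedSpace ℝ E]

theorem deriv_nonpos_of_isMinOn_Icc {f : ℝ → ℝ} {a b : ℝ} (hab : a < b)
    (hmin : IsMinOn f (Icc a b) b) : deriv f b ≤ 0 := by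
  by_contra! hpos
  have hf : HasFDerivWithinAt f (fderiv ℝ f b) (Icc a b) b :=
    (differentiableAt_of_deriv_ne_zero hpos.ne').hasFDerivAt.hasFDerivWithinAt
  have hcone : a - b ∈ posTangentConeAt (Icc a b) b :=
    sub_mem_posTangentConeAt_of_segment_subset (by rw [segment_symm, segment_eq_Icc hab.le])
  have hnonneg : 0 ≤ fderiv ℝ f b (a - b) := hmin.localize.hasFDerivWithinAt_nonneg hf hcone
  rw [fderiv_eq_smul_deriv, smul_eq_mul] at hnonneg
  nlinarith

theorem deriv_deriv_nonneg_of_isLocalMin {f : ℝ → ℝ} {a : ℝ} (hf : ContinuousAt f a)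
    (hmin : IsLocalMin f a) : 0 ≤ deriv (deriv f) a := by
  by_contra! hneg
  have hmax : IsLocalMax f a := isLocalMax_of_deriv_deriv_neg hneg hmin.deriv_eq_zero hf
  have hconst : f =ᶠ[𝓝 a] fun _ => f a := by
    filter_upwards [hmin, hmax] with y hmin_y hmax_y using le_antisymm hmax_y hmin_y
  have hzero : deriv (deriv f) a = 0 := by simpa using hconst.deriv.deriv_eq
  exact hneg.ne hzero

theorem differentiableAt_fderiv_apply {f : E → ℝ} {x : E} (hf : ContDiffAt ℝ 2 f x) (v : E) :
    DifferentiableAt ℝ (fun y => fderiv ℝ f y v) x :=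
  ((hf.fderiv_right (m := 1) (by norm_num)).differentiableAt (by norm_num)).clm_apply
    (differentiableAt_const v)

theorem fderiv_fderiv_apply_nonneg_of_isLocalMin {f : E → ℝ} {x : E} (hf : ContDiffAt ℝ 2 f x)
    (hmin : IsLocalMin f x) (v : E) : 0 ≤ fderiv ℝ (fun y => fderiv ℝ f y v) x v := by
  let line : ℝ → E := fun r => x + r • v
  have hline0 : line 0 = x := by simp [line]
  have hline (r : ℝ) : HasDerivAt line v r := by
    simpa [line] using ((hasDerivAt_id r).smul_const v).const_add x
  have htendsto : Tendsto line (𝓝 0) (𝓝 x) := hline0 ▸ (hline 0).continuousAt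
  have hdiff : ∀ᶠ y in 𝓝 x, DifferentiableAt ℝ f y :=
    (hf.eventually (by simp)).mono fun y hy => hy.differentiableAt (by norm_num)
  have hfirst : deriv (f ∘ line) =ᶠ[𝓝 0] (fun y => fderiv ℝ f y v) ∘ line := by
    filter_upwards [htendsto.eventually hdiff] with r hr
    exact (hr.hasFDerivAt.comp_hasDerivAt r (hline r)).deriv
  have hsecond : deriv (deriv (f ∘ line)) 0 = fderiv ℝ (fun y => fderiv ℝ f y v) x v := by
    rw [hfirst.deriv_eq]
    exact ((differentiableAt_fderiv_apply hf v).hasFDerivAt.comp_hasDerivAt_of_eq 0 (hline 0)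
      hline0.symm).deriv
  rw [← hsecond]
  refine deriv_deriv_nonneg_of_isLocalMin ?_ ?_
  · exact hf.continuousAt.comp_of_eq (hline 0).continuousAt hline0
  · exact (htendsto.eventually hmin).mono fun r hr => by simpa [hline0] using hr

theorem fderiv_mul_fderiv_apply_nonneg_of_isLocalMin {κ f : E → ℝ} {x : E}
    (hκ : DifferentiableAt ℝ κ x) (hκ_nonneg : 0 ≤ κ x) (hf : ContDiffAt ℝ 2 f x)
    (hmin : IsLocalMin f x) (v : E) :
    0 ≤ fderiv ℝ (fun y => κ y * fderiv ℝ f y v) x v := by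
  have hproduct : fderiv ℝ (fun y => κ y * fderiv ℝ f y v) x v
      = κ x * fderiv ℝ (fun y => fderiv ℝ f y v) x v := by
    rw [fderiv_fun_mul hκ (differentiableAt_fderiv_apply hf v)]
    simp [hmin.fderiv_eq_zero]
  rw [hproduct]
  exact mul_nonneg hκ_nonneg (fderiv_fderiv_apply_nonneg_of_isLocalMin hf hmin v)

end Calculus

theorem bddBelow_range_of_isCompact {X α : Type*} [TopologicalSpace X] [LinearOrder α]
    [TopologicalSpace α] [ClosedIicTopology α] [Nonempty α] {K : Set X} {f : X → α}
    (hK : IsCompact K) (hf : ContinuousOn f K) (hout : BddBelow (f '' Kᶜ)) :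
    BddBelow (range f) := by
  rw [← image_univ, ← union_compl_self K, image_union]
  exact (hK.bddBelow_image hf).union hout

section Comparison

variable {X : Type*} [TopologicalSpace X] {K : Set X} {T m : ℝ}

theorem le_of_deriv_pos_of_isMinOn {w : X → ℝ → ℝ} (hK : IsCompact K)
    (hw : ContinuousOn (fun q : X × ℝ => w q.1 q.2) (K ×ˢ Icc 0 T))
    (hinit : ∀ x ∈ K, m ≤ w x 0) (hout : ∀ x ∉ K, ∀ t ∈ Icc 0 T, m ≤ w x t)
    (hderiv : ∀ x ∈ K, ∀ t ∈ Ioc 0 T, IsMinOn (fun y => w y t) univ x → 0 < deriv (w x) t) :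
    ∀ x, ∀ t ∈ Icc 0 T, m ≤ w x t := by
  by_contra! ⟨x₁, t₁, ht₁, hlt⟩
  have hx₁ : x₁ ∈ K := by
    by_contra hx
    exact (hout x₁ hx t₁ ht₁).not_gt hlt
  obtain ⟨⟨x₀, t₀⟩, ⟨hx₀, ht₀⟩, hmin⟩ :=
    (hK.prod isCompact_Icc).exists_isMinOn ⟨(x₁, t₁), hx₁, ht₁⟩ hw
  replace hmin : ∀ x ∈ K, ∀ t ∈ Icc 0 T, w x₀ t₀ ≤ w x t := fun x hx t ht =>
    hmin (mk_mem_prod hx ht)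
  have hbelow : w x₀ t₀ < m := (hmin x₁ hx₁ t₁ ht₁).trans_lt hlt
  have ht₀_pos : 0 < t₀ := by
    refine lt_of_le_of_ne ht₀.1 ?_
    rintro rfl
    exact (hinit x₀ hx₀).not_gt hbelow
  have hspace : IsMinOn (fun y => w y t₀) univ x₀ := by
    intro y _
    by_cases hy : y ∈ K
    · exact hmin y hy t₀ ht₀
    · exact hbelow.le.trans (hout y hy t₀ ht₀)
  have htime : IsMinOn (w x₀) (Icc 0 t₀) t₀ := fun t ht =>
    hmin x₀ hx₀ t (Icc_subset_Icc_right ht₀.2 ht)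
  exact (deriv_nonpos_of_isMinOn_Icc ht₀_pos htime).not_gt
    (hderiv x₀ hx₀ t₀ ⟨ht₀_pos, ht₀.2⟩ hspace)

theorem le_of_deriv_nonneg_of_isMinOn {s : X → ℝ → ℝ} (hK : IsCompact K)
    (hs : ContinuousOn (fun q : X × ℝ => s q.1 q.2) (K ×ˢ Icc 0 T))
    (hinit : ∀ x ∈ K, m ≤ s x 0) (hout : ∀ x ∉ K, ∀ t ∈ Icc 0 T, m ≤ s x t)
    (hdiff : ∀ x ∈ K, ∀ t ∈ Ioc 0 T, DifferentiableAt ℝ (s x) t)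
    (hderiv : ∀ x ∈ K, ∀ t ∈ Ioc 0 T, IsMinOn (fun y => s y t) univ x → 0 ≤ deriv (s x) t) :
    ∀ x, ∀ t ∈ Icc 0 T, m ≤ s x t := by
  have hperturbed {δ : ℝ} (hδ : 0 < δ) : ∀ x, ∀ t ∈ Icc 0 T, m ≤ s x t + δ * t := by
    refine le_of_deriv_pos_of_isMinOn hK (hs.add (by fun_prop)) (by simpa using hinit) ?_ ?_
    · intro x hx t ht
      linarith [hout x hx t ht, mul_nonneg hδ.le ht.1]
    · intro x hx t ht hmin
      have hs_min : IsMinOn (fun y => s y t) univ x := fun y hy => by simpa using hmin hy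
      have hperturbed_deriv : deriv (fun r => s x r + δ * r) t = deriv (s x) t + δ := by
        rw [deriv_fun_add (hdiff x hx t ht) (by fun_prop), deriv_const_mul_id]
      rw [hperturbed_deriv]
      linarith [hderiv x hx t ht hs_min]
  intro x t ht
  have hlimit : Tendsto (fun δ : ℝ => s x t + δ * t) (𝓝[>] 0) (𝓝 (s x t)) := by
    have hcont : Continuous fun δ : ℝ => s x t + δ * t := by fun_prop
    simpa using (hcont.tendsto 0).mono_left nhdsWithin_le_nhds
  refine ge_of_tendsto hlimit ?_
  filter_upwards [self_mem_nhdsWithin] with δ hδ using hperturbed hδ x t ht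

theorem le_of_deriv_nonneg_of_isMinOn_of_Ioo {s : X → ℝ → ℝ} (hT : 0 < T) (hK : IsCompact K)
    (hs : ContinuousOn (fun q : X × ℝ => s q.1 q.2) (K ×ˢ Icc 0 T))
    (hinit : ∀ x ∈ K, m ≤ s x 0) (hout : ∀ x ∉ K, ∀ t ∈ Icc 0 T, m ≤ s x t)
    (hdiff : ∀ x ∈ K, ∀ t ∈ Ioo 0 T, DifferentiableAt ℝ (s x) t)
    (hderiv : ∀ x ∈ K, ∀ t ∈ Ioo 0 T, IsMinOn (fun y => s y t) univ x → 0 ≤ deriv (s x) t) :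
    ∀ x, ∀ t ∈ Icc 0 T, m ≤ s x t := by
  have hinterior : ∀ x, ∀ t ∈ Ioo 0 T, m ≤ s x t := by
    intro x t ht
    have hIcc : Icc 0 t ⊆ Icc 0 T := Icc_subset_Icc_right ht.2.le
    have hIoc : Ioc 0 t ⊆ Ioo 0 T := Ioc_subset_Ioo_right ht.2
    exact le_of_deriv_nonneg_of_isMinOn hK (hs.mono (prod_mono_right hIcc)) hinit
      (fun y hy r hr => hout y hy r (hIcc hr)) (fun y hy r hr => hdiff y hy r (hIoc hr))
      (fun y hy r hr => hderiv y hy r (hIoc hr)) x t (right_mem_Icc.mpr ht.1.le)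
  intro x t ht
  by_cases hx : x ∈ K
  · have hcont : ContinuousOn (s x) (Icc 0 T) :=
      hs.comp (f := fun r : ℝ => (x, r)) (by fun_prop) fun r hr => mk_mem_prod hx hr
    rw [← closure_Ioo hT.ne] at hcont ht
    exact le_on_closure (hinterior x) continuousOn_const hcont ht
  · exact hout x hx t ht

end Comparison

section Entropy

variable {d : ℕ} {ε : ℝ} {ρ s : (Fin d → ℝ) → ℝ → ℝ} {u : (Fin d → ℝ) → ℝ → Fin d → ℝ}

/-- The entropy production `ρ(∂ₜs + u·∇s) − ∇·(ερ∇s) − ε∇ρ·∇s` at the point `x` and time `t`, for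
the density `ρ`, velocity `u`, specific entropy `s` and viscosity `ε`. -/
noncomputable def entropyProduction (ε : ℝ) (ρ s : (Fin d → ℝ) → ℝ → ℝ)
    (u : (Fin d → ℝ) → ℝ → Fin d → ℝ) (x : Fin d → ℝ) (t : ℝ) : ℝ :=
  ρ x t * (deriv (fun τ => s x τ) t + ∑ i, u x t i * spd (fun y => s y t) i x)
    - (∑ j, spd (fun y => ε * ρ y t * spd (fun z => s z t) j y) j x)
    - ε * (∑ j, spd (fun y => ρ y t) j x * spd (fun y => s y t) j x)

theorem deriv_nonneg_of_entropyProduction_nonneg {x : Fin d → ℝ} {t : ℝ} (hε : 0 ≤ ε)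
    (hρ_pos : 0 < ρ x t) (hρ : DifferentiableAt ℝ (fun y => ρ y t) x)
    (hs : ContDiffAt ℝ 2 (fun y => s y t) x) (hmin : IsLocalMin (fun y => s y t) x)
    (hprod : 0 ≤ entropyProduction ε ρ s u x t) : 0 ≤ deriv (s x) t := by
  have hgrad (j : Fin d) : spd (fun y => s y t) j x = 0 := by
    simp [spd, hmin.fderiv_eq_zero]
  have hdiffusion : 0 ≤ ∑ j, spd (fun y => ε * ρ y t * spd (fun z => s z t) j y) j x :=
    Finset.sum_nonneg fun j _ => fderiv_mul_fderiv_apply_nonneg_of_isLocalMin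
      (hρ.const_mul ε) (mul_nonneg hε hρ_pos.le) hs hmin (Pi.single j 1)
  simp only [entropyProduction, hgrad, mul_zero, Finset.sum_const_zero, add_zero, sub_zero]
    at hprod
  exact nonneg_of_mul_nonneg_right (hdiffusion.trans (sub_nonneg.mp hprod)) hρ_pos

theorem stmt_11_general {T : ℝ} {K : Set (Fin d → ℝ)} (hT : 0 < T) (hε : 0 ≤ ε)
    (hK : IsCompact K) (hρ_pos : ∀ x ∈ K, ∀ t ∈ Ioo 0 T, 0 < ρ x t)
    (hρ : ∀ x ∈ K, ∀ t ∈ Ioo 0 T, DifferentiableAt ℝ (fun y => ρ y t) x)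
    (hs : ContinuousOn (fun q : (Fin d → ℝ) × ℝ => s q.1 q.2) (K ×ˢ Icc 0 T))
    (hs_space : ∀ x ∈ K, ∀ t ∈ Ioo 0 T, ContDiffAt ℝ 2 (fun y => s y t) x)
    (hs_time : ∀ x ∈ K, ∀ t ∈ Ioo 0 T, DifferentiableAt ℝ (s x) t)
    (hprod : ∀ x ∈ K, ∀ t ∈ Ioo 0 T, 0 ≤ entropyProduction ε ρ s u x t)
    (hbdd : BddBelow ((fun x => s x 0) '' Kᶜ))
    (hout : ∀ x ∉ K, ∀ t ∈ Icc 0 T, s x 0 ≤ s x t) :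
    ∀ t ∈ Icc 0 T, (⨅ x, s x 0) ≤ ⨅ x, s x t := by
  have hs_init : ContinuousOn (fun x => s x 0) K :=
    hs.comp (f := fun x => (x, (0 : ℝ))) (by fun_prop) fun x hx =>
      mk_mem_prod hx (left_mem_Icc.mpr hT.le)
  have hinit : ∀ x, (⨅ y, s y 0) ≤ s x 0 :=
    ciInf_le (bddBelow_range_of_isCompact hK hs_init hbdd)
  have hderiv_nonneg : ∀ x ∈ K, ∀ t ∈ Ioo 0 T,
      IsMinOn (fun y => s y t) univ x → 0 ≤ deriv (s x) t :=
    fun x hx t ht hmin => deriv_nonneg_of_entropyProduction_nonneg hε (hρ_pos x hx t ht)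
      (hρ x hx t ht) (hs_space x hx t ht) (hmin.isLocalMin univ_mem) (hprod x hx t ht)
  intro t ht
  exact le_ciInf fun x => le_of_deriv_nonneg_of_isMinOn_of_Ioo hT hK hs (fun y _ => hinit y)
    (fun y hy r hr => (hinit y).trans (hout y hy r hr)) hs_time hderiv_nonneg x t ht

end Entropy

/-- minimum entropy principle: if a continuous entropy field `s` on
`ℝ^d × [0,T]`, smooth on `ℝ^d × (0,T)`, satisfies the entropy production inequality
`ρ(∂ₜs + u·∇s) − ∇·(ερ∇s) − ε∇ρ·∇s ≥ 0` with positive continuous `ρ`, continuous `u`,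
and is constant `= s*` outside a compact set `K` for all times, then
`inf_x s(x,t) ≥ inf_x s(x,0)` for every `t ∈ [0,T]`. -/
theorem stmt_11 {d : ℕ} (hd : 1 ≤ d) (T : ℝ) (hT : 0 < T) (ε : ℝ) (hε : 0 < ε)
    (ρ s : (Fin d → ℝ) → ℝ → ℝ) (u : (Fin d → ℝ) → ℝ → Fin d → ℝ)
    (hρcont : ContinuousOn (fun q : (Fin d → ℝ) × ℝ => ρ q.1 q.2)
      (Set.univ ×ˢ Set.Icc 0 T))
    (hρpos : ∀ x, ∀ t ∈ Set.Icc (0 : ℝ) T, 0 < ρ x t)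
    (hucont : ContinuousOn (fun q : (Fin d → ℝ) × ℝ => u q.1 q.2)
      (Set.univ ×ˢ Set.Icc 0 T))
    (hscont : ContinuousOn (fun q : (Fin d → ℝ) × ℝ => s q.1 q.2)
      (Set.univ ×ˢ Set.Icc 0 T))
    (hsx : ∀ t ∈ Set.Ioo (0 : ℝ) T, ContDiff ℝ 2 fun x => s x t)
    (hst : ∀ x, ContDiffOn ℝ 1 (fun t => s x t) (Set.Ioo 0 T))
    (hρx : ∀ t ∈ Set.Ioo (0 : ℝ) T, ContDiff ℝ 1 fun x => ρ x t)
    (hineq : ∀ (x : Fin d → ℝ), ∀ t ∈ Set.Ioo (0 : ℝ) T,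
      ρ x t * (deriv (fun τ => s x τ) t + ∑ i, u x t i * spd (fun y => s y t) i x)
        - (∑ j, spd (fun y => ε * ρ y t * spd (fun z => s z t) j y) j x)
        - ε * (∑ j, spd (fun y => ρ y t) j x * spd (fun y => s y t) j x) ≥ 0)
    (K : Set (Fin d → ℝ)) (hK : IsCompact K) (sstar : ℝ)
    (hout : ∀ x ∉ K, ∀ t ∈ Set.Icc (0 : ℝ) T, s x t = sstar) :
    ∀ t ∈ Set.Icc (0 : ℝ) T, (⨅ x : Fin d → ℝ, s x 0) ≤ ⨅ x : Fin d → ℝ, s x t := by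
  have h0 : (0 : ℝ) ∈ Icc 0 T := left_mem_Icc.mpr hT.le
  exact stmt_11_general hT hε.le hK (fun x _ t ht => hρpos x t (Ioo_subset_Icc_self ht))
    (fun x _ t ht => (hρx t ht).differentiable one_ne_zero x)
    (hscont.mono (prod_mono_left (subset_univ K))) (fun x _ t ht => (hsx t ht).contDiffAt)
    (fun x _ t ht => ((hst x).contDiffAt (Ioo_mem_nhds ht.1 ht.2)).differentiableAt one_ne_zero)
    (fun x _ => hineq x) ⟨sstar, forall_mem_image.mpr fun x hx => (hout x hx 0 h0).ge⟩
    (fun x hx t ht => (hout x hx 0 h0).trans_le (hout x hx t ht).ge)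
end

section
/- Let γ > 1, d ≥ 1 and let f : ℝ → ℝ be twice continuously differentiable with f'(y) > 0 and f'(y) − γ f''(y) > 0 for all y ∈ ℝ. On the open convex set Ω := {(ρ, m, E, B) ∈ ℝ × ℝ^d × ℝ × ℝ^d : ρ > 0 and E − |m|²/(2ρ) − |B|²/2 > 0}, define e(U) := (E − |m|²/(2ρ) − |B|²/2)/ρ, s(U) := ln e(U) − (γ−1) ln ρ, and F(U) := −ρ f(s(U)). Then F is strictly convex on Ω. -/
open scoped BigOperators

/-- Specific internal energy `e(U) = (E − |m|²/(2ρ) − |B|²/2)/ρ` of an MHD state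
`U = (ρ, m, E, B)`. -/
noncomputable def eState {d : ℕ} (U : ℝ × (Fin d → ℝ) × ℝ × (Fin d → ℝ)) : ℝ :=
  (U.2.2.1 - (∑ i, (U.2.1 i) ^ 2) / (2 * U.1) - (∑ i, (U.2.2.2 i) ^ 2) / 2) / U.1

/-- Ideal-gas specific entropy `s(U) = ln e(U) − (γ−1) ln ρ`. -/
noncomputable def sState (γ : ℝ) {d : ℕ} (U : ℝ × (Fin d → ℝ) × ℝ × (Fin d → ℝ)) : ℝ :=
  Real.log (eState U) - (γ - 1) * Real.log U.1

/-- Generalized entropy `F(U) = −ρ f(s(U))`. -/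
noncomputable def FState (γ : ℝ) (f : ℝ → ℝ) {d : ℕ}
    (U : ℝ × (Fin d → ℝ) × ℝ × (Fin d → ℝ)) : ℝ :=
  -(U.1 * f (sState γ U))

/-!
With `ε = E - |m|²/(2ρ) - |B|²/2` the entropy is `s = γ log (ε ^ (1/γ) / ρ)`, so
`F = ρ φ(ε ^ (1/γ) / ρ)` is the perspective of `φ y = -f (γ log y)` at `(ρ, ε ^ (1/γ))`. The two
conditions on `f` say that `φ` is strictly decreasing and strictly convex, and `ε ↦ ε ^ (1/γ)` is
strictly concave; hence `F` is strictly convex in `(ρ, ε)` and strictly decreasing in `ε`. As `ε` is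
concave in `U` (its kinetic part is itself a perspective), `F` is convex in `U`. Strictness can only
fail between states with equal `ρ` and `ε`; these differ in velocity or in magnetic field, and there
`ε` is strictly concave.
-/

open Set

section Perspective

variable {X : Type*} [AddCommGroup X] [Module ℝ X] {s : Set X} {g : X → ℝ}

/-- The perspective `(r, x) ↦ r g(x / r)` of a function `g`, of interest for `0 < r`. -/
noncomputable def perspective (g : X → ℝ) (p : ℝ × X) : ℝ :=
  p.1 * g (p.1⁻¹ • p.2)

lemma inv_smul_smul_add_smul {a b r r' : ℝ} (hr : r ≠ 0) (hr' : r' ≠ 0) (x x' : X) :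
    (a * r + b * r')⁻¹ • (a • x + b • x') =
      (a * r / (a * r + b * r')) • r⁻¹ • x + (b * r' / (a * r + b * r')) • r'⁻¹ • x' := by
  simp only [smul_add, smul_smul]
  congr 2 <;> field_simp

section Sublinear

variable {p q : ℝ × X} {a b : ℝ}

lemma perspective_smul_add_smul_le (hg : ConvexOn ℝ s g) (hp : 0 < p.1) (hq : 0 < q.1)
    (hps : p.1⁻¹ • p.2 ∈ s) (hqs : q.1⁻¹ • q.2 ∈ s) (ha : 0 < a) (hb : 0 < b) :
    perspective g (a • p + b • q) ≤ a * perspective g p + b * perspective g q := by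
  have hr : 0 < a * p.1 + b * q.1 := by positivity
  have hconv := hg.2 hps hqs (show 0 ≤ a * p.1 / (a * p.1 + b * q.1) by positivity)
    (show 0 ≤ b * q.1 / (a * p.1 + b * q.1) by positivity) (by field_simp)
  rw [← inv_smul_smul_add_smul hp.ne' hq.ne'] at hconv
  calc perspective g (a • p + b • q)
      ≤ (a * p.1 + b * q.1) * _ := mul_le_mul_of_nonneg_left hconv hr.le
    _ = a * perspective g p + b * perspective g q := by
      simp only [perspective, smul_eq_mul]
      field_simp

lemma perspective_smul_add_smul_lt (hg : StrictConvexOn ℝ s g) (hp : 0 < p.1) (hq : 0 < q.1)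
    (hps : p.1⁻¹ • p.2 ∈ s) (hqs : q.1⁻¹ • q.2 ∈ s) (hpq : p.1⁻¹ • p.2 ≠ q.1⁻¹ • q.2)
    (ha : 0 < a) (hb : 0 < b) :
    perspective g (a • p + b • q) < a * perspective g p + b * perspective g q := by
  have hr : 0 < a * p.1 + b * q.1 := by positivity
  have hconv := hg.2 hps hqs hpq (show 0 < a * p.1 / (a * p.1 + b * q.1) by positivity)
    (show 0 < b * q.1 / (a * p.1 + b * q.1) by positivity) (by field_simp)
  rw [← inv_smul_smul_add_smul hp.ne' hq.ne'] at hconv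
  calc perspective g (a • p + b • q)
      < (a * p.1 + b * q.1) * _ := mul_lt_mul_of_pos_left hconv hr
    _ = a * perspective g p + b * perspective g q := by
      simp only [perspective, smul_eq_mul]
      field_simp

end Sublinear

lemma strictAntiOn_perspective {φ : ℝ → ℝ} (hφ : StrictAntiOn φ (Ioi 0)) {r : ℝ} (hr : 0 < r) :
    StrictAntiOn (fun y => perspective φ (r, y)) (Ioi 0) := fun _ hy _ hz hyz =>
  have hr' : 0 < r⁻¹ := inv_pos.2 hr
  mul_lt_mul_of_pos_left
    (hφ (mul_pos hr' hy) (mul_pos hr' hz) (mul_lt_mul_of_pos_left hyz hr')) hr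

lemma strictConvexOn_perspective_comp {φ : ℝ → ℝ} {k : X → ℝ}
    (hφ : StrictConvexOn ℝ (Ioi 0) φ) (hφ_anti : StrictAntiOn φ (Ioi 0))
    (hk : StrictConcaveOn ℝ s k) (hk_pos : ∀ x ∈ s, 0 < k x) :
    StrictConvexOn ℝ (Ioi 0 ×ˢ s) (fun p : ℝ × X => perspective φ (p.1, k p.2)) := by
  refine ⟨(convex_Ioi 0).prod hk.1, ?_⟩
  rintro ⟨r, x⟩ ⟨hr, hx⟩ ⟨r', x'⟩ ⟨hr', hx'⟩ hne a b ha hb hab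
  simp only [mem_Ioi] at hr hr'
  have hkx := hk_pos x hx
  have hkx' := hk_pos x' hx'
  have hslope : r⁻¹ • k x ∈ Ioi 0 := mul_pos (inv_pos.2 hr) hkx
  have hslope' : r'⁻¹ • k x' ∈ Ioi 0 := mul_pos (inv_pos.2 hr') hkx'
  rcases eq_or_ne x x' with rfl | hxx'
  · have hslope_ne : r⁻¹ • k x ≠ r'⁻¹ • k x := fun h =>
      hne (by rw [inv_injective (mul_right_cancel₀ hkx.ne' h)])
    simpa [Convex.combo_self hab, ← add_mul, hab] using
      perspective_smul_add_smul_lt (p := (r, k x)) (q := (r', k x)) hφ hr hr' hslope hslope'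
        hslope_ne ha hb
  · have hk_lt := hk.2 hx hx' hxx' ha hb hab
    have hcombo : 0 < a • k x + b • k x' := by positivity
    have hr_pos : 0 < a • r + b • r' := by positivity
    calc perspective φ (a • r + b • r', k (a • x + b • x'))
        < perspective φ (a • r + b • r', a • k x + b • k x') :=
          strictAntiOn_perspective hφ_anti hr_pos hcombo (hcombo.trans hk_lt) hk_lt
      _ ≤ a * perspective φ (r, k x) + b * perspective φ (r', k x') :=
          perspective_smul_add_smul_le (p := (r, k x)) (q := (r', k x')) hφ.convexOn hr hr'
            hslope hslope' ha hb

end Perspective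

lemma strictConvexOn_comp_prodMk_concave {X Y : Type*} [AddCommGroup X] [Module ℝ X]
    [AddCommGroup Y] [Module ℝ Y] {Ω : Set X} {S : Set Y} {T : Set ℝ} {H : Y × ℝ → ℝ} {ε : X → ℝ}
    (ℓ : X →ₗ[ℝ] Y) (hH : StrictConvexOn ℝ (S ×ˢ T) H)
    (hH_anti : ∀ y ∈ S, StrictAntiOn (fun t => H (y, t)) T) (hε : ConcaveOn ℝ Ω ε)
    (hℓS : MapsTo ℓ Ω S) (hεT : MapsTo ε Ω T)
    (hε_lt : ∀ ⦃x⦄, x ∈ Ω → ∀ ⦃y⦄, y ∈ Ω → x ≠ y → ℓ x = ℓ y → ε x = ε y →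
      ∀ ⦃a b : ℝ⦄, 0 < a → 0 < b → a + b = 1 → a • ε x + b • ε y < ε (a • x + b • y)) :
    StrictConvexOn ℝ Ω (fun x => H (ℓ x, ε x)) := by
  refine ⟨hε.1, fun x hx y hy hxy a b ha hb hab => ?_⟩
  have hz : a • x + b • y ∈ Ω := hε.1 hx hy ha.le hb.le hab
  have hmem (w) (hw : w ∈ Ω) : (ℓ w, ε w) ∈ S ×ˢ T := ⟨hℓS hw, hεT hw⟩
  have hcombo : a • (ℓ x, ε x) + b • (ℓ y, ε y) ∈ S ×ˢ T :=
    hH.1 (hmem x hx) (hmem y hy) ha.le hb.le hab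
  have hanti := hH_anti _ hcombo.1
  have hℓ : ℓ (a • x + b • y) = a • ℓ x + b • ℓ y := by simp only [map_add, map_smul]
  simp only [hℓ]
  by_cases hpair : (ℓ x, ε x) = (ℓ y, ε y)
  · obtain ⟨hℓxy, hεxy⟩ := Prod.ext_iff.1 hpair
    exact (hanti hcombo.2 (hεT hz) (hε_lt hx hy hxy hℓxy hεxy ha hb hab)).trans_le
      (hH.convexOn.2 (hmem x hx) (hmem y hy) ha.le hb.le hab)
  · exact (hanti.antitoneOn hcombo.2 (hεT hz) (hε.2 hx hy ha.le hb.le hab)).trans_lt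
      (hH.2 (hmem x hx) (hmem y hy) hpair ha hb hab)

section QuadraticForm

variable {V : Type*} [AddCommGroup V] [Module ℝ V] {Q : QuadraticForm ℝ V}

lemma quadraticForm_smul_add_smul (Q : QuadraticForm ℝ V) {a b : ℝ} (hab : a + b = 1) (x y : V) :
    Q (a • x + b • y) = a * Q x + b * Q y - a * b * Q (x - y) := by
  obtain rfl : b = 1 - a := by linarith
  rw [sub_eq_add_neg x y, ← neg_one_smul ℝ y]
  simp only [QuadraticMap.map_add Q, Q.map_smul, QuadraticMap.polar_smul_left,
    QuadraticMap.polar_smul_right, smul_eq_mul]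
  ring

lemma strictConvexOn_of_posDef (hQ : Q.PosDef) : StrictConvexOn ℝ univ Q := by
  refine ⟨convex_univ, fun x _ y _ hxy a b ha hb hab => ?_⟩
  have hgap : 0 < a * b * Q (x - y) := mul_pos (mul_pos ha hb) (hQ _ (sub_ne_zero.2 hxy))
  rw [quadraticForm_smul_add_smul Q hab]
  simpa only [smul_eq_mul] using sub_lt_self _ hgap

lemma perspective_quadraticForm (Q : QuadraticForm ℝ V) (p : ℝ × V) :
    perspective Q p = Q p.2 / p.1 := by
  rw [perspective, Q.map_smul, smul_eq_mul]
  rcases eq_or_ne p.1 0 with h | h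
  · simp [h]
  · field_simp

lemma posDef_weightedSumSquares {ι : Type*} [Fintype ι] {w : ι → ℝ} (hw : ∀ i, 0 < w i) :
    (QuadraticMap.weightedSumSquares ℝ w).PosDef := by
  intro x hx
  obtain ⟨i, hi⟩ := Function.ne_iff.1 hx
  rw [QuadraticMap.weightedSumSquares_apply]
  exact Finset.sum_pos' (fun j _ => mul_nonneg (hw j).le (mul_self_nonneg (x j)))
    ⟨i, Finset.mem_univ i, mul_pos (hw i) (mul_self_pos.2 hi)⟩

end QuadraticForm

section InternalEnergy

variable {V W : Type*} [AddCommGroup V] [Module ℝ V] [AddCommGroup W] [Module ℝ W]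
  {P : QuadraticForm ℝ V} {Q : QuadraticForm ℝ W} {U U' : ℝ × V × ℝ × W} {a b : ℝ}

/-- Internal energy per unit volume `E - P(m)/(2ρ) - Q(B)/2` of the state `(ρ, m, E, B)`, with
quadratic forms `P` and `Q` in place of the squared Euclidean norms of momentum and field. -/
noncomputable def internalEnergyDensity (P : QuadraticForm ℝ V) (Q : QuadraticForm ℝ W)
    (U : ℝ × V × ℝ × W) : ℝ :=
  U.2.2.1 - P U.2.1 / (2 * U.1) - Q U.2.2.2 / 2

lemma internalEnergyDensity_eq_sub_perspective (P : QuadraticForm ℝ V) (Q : QuadraticForm ℝ W)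
    (U : ℝ × V × ℝ × W) :
    internalEnergyDensity P Q U =
      U.2.2.1 - perspective P (U.1, U.2.1) / 2 - Q U.2.2.2 / 2 := by
  rw [internalEnergyDensity, perspective_quadraticForm, div_div, mul_comm U.1]

lemma state_ext (hρ_ne : U.1 ≠ 0) (hρ : U.1 = U'.1) (hv : U.1⁻¹ • U.2.1 = U'.1⁻¹ • U'.2.1)
    (hε : internalEnergyDensity P Q U = internalEnergyDensity P Q U')
    (hB : U.2.2.2 = U'.2.2.2) : U = U' := by
  have hm : U.2.1 = U'.2.1 := by
    rw [← hρ] at hv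
    exact smul_right_injective V (inv_ne_zero hρ_ne) hv
  have hE : U.2.2.1 = U'.2.2.1 := by
    simpa only [internalEnergyDensity, hρ, hm, hB, sub_left_inj] using hε
  exact Prod.ext hρ (Prod.ext hm (Prod.ext hE hB))

lemma le_internalEnergyDensity_smul_add_smul (hP : P.PosDef) (hQ : Q.PosDef)
    (hU : 0 < U.1) (hU' : 0 < U'.1) (ha : 0 < a) (hb : 0 < b) (hab : a + b = 1) :
    a * internalEnergyDensity P Q U + b * internalEnergyDensity P Q U' ≤
      internalEnergyDensity P Q (a • U + b • U') := by
  have hkin := perspective_smul_add_smul_le (p := (U.1, U.2.1)) (q := (U'.1, U'.2.1))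
    (strictConvexOn_of_posDef hP).convexOn hU hU' trivial trivial ha hb
  have hmag := (strictConvexOn_of_posDef hQ).convexOn.2 (mem_univ U.2.2.2) (mem_univ U'.2.2.2)
    ha.le hb.le hab
  simp only [internalEnergyDensity_eq_sub_perspective, Prod.fst_add, Prod.snd_add, Prod.smul_fst,
    Prod.smul_snd, Prod.smul_mk, Prod.mk_add_mk, smul_eq_mul] at hkin hmag ⊢
  linarith

lemma lt_internalEnergyDensity_smul_add_smul (hP : P.PosDef) (hQ : Q.PosDef)
    (hU : 0 < U.1) (hU' : 0 < U'.1)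
    (hne : U.1⁻¹ • U.2.1 ≠ U'.1⁻¹ • U'.2.1 ∨ U.2.2.2 ≠ U'.2.2.2)
    (ha : 0 < a) (hb : 0 < b) (hab : a + b = 1) :
    a * internalEnergyDensity P Q U + b * internalEnergyDensity P Q U' <
      internalEnergyDensity P Q (a • U + b • U') := by
  have hP_conv := strictConvexOn_of_posDef hP
  have hQ_conv := strictConvexOn_of_posDef hQ
  have hkin := perspective_smul_add_smul_le (p := (U.1, U.2.1)) (q := (U'.1, U'.2.1))
    hP_conv.convexOn hU hU' trivial trivial ha hb
  have hmag := hQ_conv.convexOn.2 (mem_univ U.2.2.2) (mem_univ U'.2.2.2) ha.le hb.le hab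
  simp only [internalEnergyDensity_eq_sub_perspective, Prod.fst_add, Prod.snd_add, Prod.smul_fst,
    Prod.smul_snd, Prod.smul_mk, Prod.mk_add_mk, smul_eq_mul] at hkin hmag ⊢
  rcases hne with hv | hB
  · have hkin_lt := perspective_smul_add_smul_lt (p := (U.1, U.2.1)) (q := (U'.1, U'.2.1))
      hP_conv hU hU' trivial trivial hv ha hb
    simp only [Prod.smul_mk, Prod.mk_add_mk, smul_eq_mul] at hkin_lt
    linarith
  · have hmag_lt := hQ_conv.2 (mem_univ U.2.2.2) (mem_univ U'.2.2.2) hB ha hb hab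
    simp only [smul_eq_mul] at hmag_lt
    linarith

lemma concaveOn_internalEnergyDensity (hP : P.PosDef) (hQ : Q.PosDef) :
    ConcaveOn ℝ {U : ℝ × V × ℝ × W | 0 < U.1} (internalEnergyDensity P Q) :=
  concaveOn_iff_forall_pos.2 ⟨(convex_Ioi 0).linear_preimage (LinearMap.fst ℝ ℝ _),
    fun _ hU _ hU' _ _ ha hb hab => le_internalEnergyDensity_smul_add_smul hP hQ hU hU' ha hb hab⟩

end InternalEnergy

section IdealGas

variable {γ : ℝ} {f : ℝ → ℝ}

lemma strictAnti_deriv_mul_exp (hγ : 0 < γ) (hf : Differentiable ℝ (deriv f))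
    (hf' : ∀ y, 0 < deriv f y - γ * deriv (deriv f) y) :
    StrictAnti (fun z => deriv f z * Real.exp (-z / γ)) := by
  refine strictAnti_of_deriv_neg fun z => ?_
  have hexp : HasDerivAt (fun z => Real.exp (-z / γ)) (Real.exp (-z / γ) * (-1 / γ)) z :=
    ((hasDerivAt_id z).neg.div_const γ).exp
  rw [((hf z).hasDerivAt.fun_mul hexp).deriv]
  calc deriv (deriv f) z * Real.exp (-z / γ) + deriv f z * (Real.exp (-z / γ) * (-1 / γ))
      = -(Real.exp (-z / γ) / γ * (deriv f z - γ * deriv (deriv f) z)) := by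
        field_simp
        ring
    _ < 0 := neg_neg_of_pos (mul_pos (by positivity) (hf' z))

lemma strictConcaveOn_comp_mul_log (hγ : 0 < γ) (hf : Differentiable ℝ f)
    (hf₂ : Differentiable ℝ (deriv f)) (hf' : ∀ y, 0 < deriv f y - γ * deriv (deriv f) y) :
    StrictConcaveOn ℝ (Ioi 0) (fun y => f (γ * Real.log y)) := by
  have hderiv (y : ℝ) (hy : 0 < y) :
      HasDerivAt (fun y => f (γ * Real.log y)) (deriv f (γ * Real.log y) * (γ * y⁻¹)) y :=
    (hf _).hasDerivAt.comp y ((Real.hasDerivAt_log hy.ne').const_mul γ)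
  have hderiv_eq (y : ℝ) (hy : 0 < y) : deriv (fun y => f (γ * Real.log y)) y =
      γ * (deriv f (γ * Real.log y) * Real.exp (-(γ * Real.log y) / γ)) := by
    rw [(hderiv y hy).deriv, ← mul_neg, mul_div_cancel_left₀ _ hγ.ne', Real.exp_neg,
      Real.exp_log hy]
    ring
  refine StrictAntiOn.strictConcaveOn_of_deriv (convex_Ioi 0)
    (fun y hy => (hderiv y hy).continuousAt.continuousWithinAt) ?_
  rw [interior_Ioi]
  intro y hy z hz hyz
  rw [hderiv_eq y hy, hderiv_eq z hz]
  exact mul_lt_mul_of_pos_left (strictAnti_deriv_mul_exp hγ hf₂ hf'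
    (mul_lt_mul_of_pos_left (Real.log_lt_log hy hyz) hγ)) hγ

/-- The generalized entropy `-ρ f(s)` of an ideal gas as a function of the mass density `ρ` and the
internal energy density `ε = ρ e`, for the specific entropy `s = log (ε/ρ) - (γ - 1) log ρ`. -/
noncomputable def idealGasEntropy (γ : ℝ) (f : ℝ → ℝ) (p : ℝ × ℝ) : ℝ :=
  -(p.1 * f (Real.log (p.2 / p.1) - (γ - 1) * Real.log p.1))

lemma idealGasEntropy_eq_perspective (hγ : γ ≠ 0) (f : ℝ → ℝ) {p : ℝ × ℝ}
    (hp : p ∈ Ioi (0 : ℝ) ×ˢ Ioi (0 : ℝ)) :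
    idealGasEntropy γ f p = perspective (fun y => -f (γ * Real.log y)) (p.1, p.2 ^ γ⁻¹) := by
  obtain ⟨hρ : 0 < p.1, hε : 0 < p.2⟩ := hp
  have hlog : γ * Real.log (p.1⁻¹ * p.2 ^ γ⁻¹) =
      Real.log (p.2 / p.1) - (γ - 1) * Real.log p.1 := by
    rw [Real.log_mul (by positivity) (by positivity), Real.log_inv, Real.log_rpow hε,
      Real.log_div hε.ne' hρ.ne']
    field_simp
    ring
  simp only [idealGasEntropy, perspective, smul_eq_mul, hlog, mul_neg]

lemma strictAntiOn_idealGasEntropy (hf : StrictMono f) {ρ : ℝ} (hρ : 0 < ρ) :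
    StrictAntiOn (fun ε => idealGasEntropy γ f (ρ, ε)) (Ioi 0) := fun ε hε ε' _ hlt =>
  have hlog : Real.log (ε / ρ) < Real.log (ε' / ρ) :=
    Real.log_lt_log (div_pos hε hρ) (div_lt_div_of_pos_right hlt hρ)
  neg_lt_neg (mul_lt_mul_of_pos_left (hf (sub_lt_sub_right hlog _)) hρ)

lemma strictConvexOn_idealGasEntropy (hγ : 1 < γ) (hf : StrictMono f)
    (hf_log : StrictConcaveOn ℝ (Ioi 0) (fun y => f (γ * Real.log y))) :
    StrictConvexOn ℝ (Ioi 0 ×ˢ Ioi 0) (idealGasEntropy γ f) := by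
  have hγ₀ : 0 < γ := one_pos.trans hγ
  have hanti : StrictAntiOn (fun y => -f (γ * Real.log y)) (Ioi 0) := fun y hy z _ hyz =>
    neg_lt_neg (hf (mul_lt_mul_of_pos_left (Real.log_lt_log hy hyz) hγ₀))
  have hrpow : StrictConcaveOn ℝ (Ioi 0) (fun t : ℝ => t ^ γ⁻¹) :=
    (Real.strictConcaveOn_rpow (inv_pos.2 hγ₀) (inv_lt_one_of_one_lt₀ hγ)).subset
      Ioi_subset_Ici_self (convex_Ioi 0)
  exact (strictConvexOn_perspective_comp hf_log.neg hanti hrpow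
    fun t ht => Real.rpow_pos_of_pos ht _).congr
      fun p hp => (idealGasEntropy_eq_perspective hγ₀.ne' f hp).symm

end IdealGas

theorem stmt_14_general {V W : Type*} [AddCommGroup V] [Module ℝ V] [AddCommGroup W] [Module ℝ W]
    {P : QuadraticForm ℝ V} {Q : QuadraticForm ℝ W} (hP : P.PosDef) (hQ : Q.PosDef)
    {γ : ℝ} (hγ : 1 < γ) {f : ℝ → ℝ} (hf : Differentiable ℝ f) (hf₂ : Differentiable ℝ (deriv f))
    (hf' : ∀ y, 0 < deriv f y) (hf'' : ∀ y, 0 < deriv f y - γ * deriv (deriv f) y) :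
    StrictConvexOn ℝ {U : ℝ × V × ℝ × W | 0 < U.1 ∧ 0 < internalEnergyDensity P Q U}
      (fun U => idealGasEntropy γ f (U.1, internalEnergyDensity P Q U)) := by
  have hf_mono : StrictMono f := strictMono_of_deriv_pos hf'
  have hf_log := strictConcaveOn_comp_mul_log (one_pos.trans hγ) hf hf₂ hf''
  have hε := concaveOn_internalEnergyDensity hP hQ
  refine strictConvexOn_comp_prodMk_concave (LinearMap.fst ℝ ℝ (V × ℝ × W))
    (strictConvexOn_idealGasEntropy hγ hf_mono hf_log)
    (fun ρ hρ => strictAntiOn_idealGasEntropy hf_mono hρ)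
    (hε.subset (fun U hU => hU.1) (hε.convex_gt 0)) (fun U hU => hU.1) (fun U hU => hU.2) ?_
  intro U hU U' hU' hne hρ hεU a b ha hb hab
  refine lt_internalEnergyDensity_smul_add_smul hP hQ hU.1 hU'.1 ?_ ha hb hab
  by_contra! ⟨hv, hB⟩
  exact hne (state_ext hU.1.ne' hρ hv hεU hB)

/-- if `f' > 0` and `f' − γ f'' > 0` everywhere, the generalized entropy
`F = −ρ f(s)` is strictly convex on the open convex set of admissible MHD states. -/
theorem stmt_14 (γ : ℝ) (hγ : 1 < γ) {d : ℕ} (hd : 1 ≤ d)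
    (f : ℝ → ℝ) (hf : ContDiff ℝ 2 f)
    (hf' : ∀ y : ℝ, 0 < deriv f y)
    (hf'' : ∀ y : ℝ, 0 < deriv f y - γ * deriv (deriv f) y) :
    StrictConvexOn ℝ
      {U : ℝ × (Fin d → ℝ) × ℝ × (Fin d → ℝ) |
        0 < U.1 ∧
        0 < U.2.2.1 - (∑ i, (U.2.1 i) ^ 2) / (2 * U.1) - (∑ i, (U.2.2.2 i) ^ 2) / 2}
      (FState γ f) := by
  have hnorm : (QuadraticMap.weightedSumSquares ℝ (1 : Fin d → ℝ)).PosDef :=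
    posDef_weightedSumSquares fun _ => one_pos
  simpa only [internalEnergyDensity, QuadraticMap.weightedSumSquares_apply, Pi.one_apply, one_smul,
    ← sq] using! stmt_14_general hnorm hnorm hγ (hf.differentiable two_ne_zero)
      hf.differentiable_deriv_two hf' hf''
end
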